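/- arXiv:1507.02901 — 5 statements merged into one kernel-verified Lean document; each statement's English description precedes it below -/
import Mathlib

section
/- Let N be a normal bounded operator on a complex Hilbert space E and T a pure subnormal bounded operator on a complex Hilbert space F, and suppose the direct sum Z = N⊕T, acting on the Hilbert space direct sum E⊕F, is injective. Let λ ∈ ℂ and let X be a bounded operator on E⊕F satisfying Z∘X = λ·(X∘Z), with block matrix [[X₁,X₂],[X₃,X₄]] where X₁ : E → E, X₂ : F → E, X₃ : E → F and X₄ : F → F. Then X₃ = 0, N∘X₁ = λ·(X₁∘N), T∘X₄ = λ·(X₄∘T) and N∘X₂ = λ·(X₂∘T). -/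
open ContinuousLinearMap

noncomputable section

/-- The modulus `|T| = (T*T)^(1/2)` of a bounded operator on a complex Hilbert space. -/
def modulus {H : Type*} [NormedAddCommGroup H] [InnerProductSpace ℂ H] [CompleteSpace H]
    (T : H →L[ℂ] H) : H →L[ℂ] H :=
  CFC.sqrt (adjoint T ∘L T)

/-- A bounded operator is quasinormal if it commutes with its modulus. -/
def IsQuasinormal {H : Type*} [NormedAddCommGroup H] [InnerProductSpace ℂ H] [CompleteSpace H]
    (T : H →L[ℂ] H) : Prop :=
  T ∘L modulus T = modulus T ∘L T

/-- `m_T = inf {⟨Tx,x⟩ : ‖x‖ = 1}` (real part of the inner product). -/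
def mval {H : Type*} [NormedAddCommGroup H] [InnerProductSpace ℂ H]
    (T : H →L[ℂ] H) : ℝ :=
  sInf {r : ℝ | ∃ x : H, ‖x‖ = 1 ∧ r = T.reApplyInnerSelf x}

/-- The set of intertwining values `Λ_int(R,M)`. -/
def intertwiningValues {H K : Type*} [NormedAddCommGroup H] [InnerProductSpace ℂ H]
    [NormedAddCommGroup K] [InnerProductSpace ℂ K]
    (R : H →L[ℂ] H) (M : K →L[ℂ] K) : Set ℂ :=
  {l : ℂ | ∃ X : K →L[ℂ] H, X ≠ 0 ∧ R ∘L X = l • (X ∘L M)}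

/-- The set of extended eigenvalues `σ_ext(T)`. -/
def extSpectrum {H : Type*} [NormedAddCommGroup H] [InnerProductSpace ℂ H]
    (T : H →L[ℂ] H) : Set ℂ :=
  {l : ℂ | ∃ X : H →L[ℂ] H, X ≠ 0 ∧ T ∘L X = l • (X ∘L T)}

/-- The set `𝒜_r(R,A)` of operators `L` with `‖Rⁿ(Lx)‖ ≤ c·rⁿ·‖Aⁿx‖` for all `n, x`. -/
def calA {H 𝔏 : Type*} [NormedAddCommGroup H] [InnerProductSpace ℂ H]
    [NormedAddCommGroup 𝔏] [InnerProductSpace ℂ 𝔏]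
    (r : ℝ) (R : H →L[ℂ] H) (A : 𝔏 →L[ℂ] 𝔏) : Set (𝔏 →L[ℂ] H) :=
  {L : 𝔏 →L[ℂ] H | ∃ c : ℝ, 0 ≤ c ∧
    ∀ (n : ℕ) (x : 𝔏), ‖(R ^ n) (L x)‖ ≤ c * r ^ n * ‖(A ^ n) x‖}

/-- An operator is pure if it has no nonzero reducing subspace on which it is normal. -/
def IsPure {H : Type*} [NormedAddCommGroup H] [InnerProductSpace ℂ H] [CompleteSpace H]
    (T : H →L[ℂ] H) : Prop :=
  ∀ M : Submodule ℂ H, IsClosed (M : Set H) → (∀ x ∈ M, T x ∈ M) →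
    (∀ x ∈ M, adjoint T x ∈ M) →
    (∀ x ∈ M, T (adjoint T x) = adjoint T (T x)) → M = ⊥

universe u

/-- An operator is subnormal if it has a normal extension on a larger Hilbert space. -/
def IsSubnormal {F : Type*} [NormedAddCommGroup F] [InnerProductSpace ℂ F] [CompleteSpace F]
    (T : F →L[ℂ] F) : Prop :=
  ∃ (K : Type u) (_ : NormedAddCommGroup K) (_ : InnerProductSpace ℂ K) (_ : CompleteSpace K)
    (j : F →ₗᵢ[ℂ] K) (M : K →L[ℂ] K),
      adjoint M ∘L M = M ∘L adjoint M ∧ ∀ x : F, M (j x) = j (T x)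

end


section helpers
variable {E K : Type*} [NormedAddCommGroup E] [InnerProductSpace ℂ E] [CompleteSpace E]
  [NormedAddCommGroup K] [InnerProductSpace ℂ K] [CompleteSpace K]

noncomputable def auxI1 (E K : Type*) [NormedAddCommGroup E] [InnerProductSpace ℂ E]
  [NormedAddCommGroup K] [InnerProductSpace ℂ K] : E →L[ℂ] WithLp 2 (E × K) :=
  (WithLp.prodContinuousLinearEquiv 2 ℂ E K).symm.toContinuousLinearMap ∘L ContinuousLinearMap.inl ℂ E K

noncomputable def auxI2 (E K : Type*) [NormedAddCommGroup E] [InnerProductSpace ℂ E]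
  [NormedAddCommGroup K] [InnerProductSpace ℂ K] : K →L[ℂ] WithLp 2 (E × K) :=
  (WithLp.prodContinuousLinearEquiv 2 ℂ E K).symm.toContinuousLinearMap ∘L ContinuousLinearMap.inr ℂ E K

lemma aux11 (x : E) : adjoint (auxI1 E K) (auxI1 E K x) = x := by
  refine ext_inner_right ℂ fun y => ?_
  rw [adjoint_inner_left]; simp [auxI1]
lemma aux22 (x : K) : adjoint (auxI2 E K) (auxI2 E K x) = x := by
  refine ext_inner_right ℂ fun y => ?_
  rw [adjoint_inner_left]; simp [auxI2]
lemma aux12 (x : K) : adjoint (auxI1 E K) (auxI2 E K x) = 0 := by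
  refine ext_inner_right ℂ fun y => ?_
  rw [adjoint_inner_left]; simp [auxI1, auxI2]
lemma aux21 (x : E) : adjoint (auxI2 E K) (auxI1 E K x) = 0 := by
  refine ext_inner_right ℂ fun y => ?_
  rw [adjoint_inner_left]; simp [auxI1, auxI2]

lemma fp_hetero (A : E →L[ℂ] E) (M : K →L[ℂ] K) (Y : E →L[ℂ] K)
    (hA : ∀ x, adjoint A (A x) = A (adjoint A x))
    (hM : ∀ x, adjoint M (M x) = M (adjoint M x))
    (h : ∀ x, M (Y x) = Y (A x)) (x : E) : adjoint M (Y x) = Y (adjoint A x) := by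
  set i := auxI1 E K
  set k := auxI2 E K
  let a : WithLp 2 (E × K) →L[ℂ] WithLp 2 (E × K) :=
    i ∘L A ∘L adjoint i + k ∘L M ∘L adjoint k
  let y : WithLp 2 (E × K) →L[ℂ] WithLp 2 (E × K) := k ∘L Y ∘L adjoint i
  have hs : star a = i ∘L adjoint A ∘L adjoint i + k ∘L adjoint M ∘L adjoint k := by
    simp [a, star_eq_adjoint, adjoint_comp, ContinuousLinearMap.comp_assoc]
  have hn : IsStarNormal a := by
    refine ⟨?_⟩
    show star a * a = a * star a
    rw [hs]
    ext1 v
    simp [a, i, k, aux11, aux22, aux12, aux21, hA, hM]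
  have hc : Commute a y := by
    show a * y = y * a
    ext1 v
    simp [a, y, i, k, aux11, aux22, aux12, aux21, h]
  have hc2 : star a * y = y * star a := by
    have : Commute (star a) y := by
      exact hn.commute_star_left hc
    exact this
  have := congrArg (adjoint k) (DFunLike.congr_fun hc2 (i x))
  rw [hs] at this
  simpa [y, i, k, aux11, aux22, aux12, aux21] using this

end helpers

theorem block_structure_extended_eigenvector_subnormal
    {E F : Type*} [NormedAddCommGroup E] [InnerProductSpace ℂ E] [CompleteSpace E] [NormedAddCommGroup F] [InnerProductSpace ℂ F] [CompleteSpace F]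
    (N : E →L[ℂ] E) (hN : adjoint N ∘L N = N ∘L adjoint N)
    (T : F →L[ℂ] F) (hTsub : IsSubnormal.{_} T) (hTpure : IsPure T)
    (Z : WithLp 2 (E × F) →L[ℂ] WithLp 2 (E × F))
    (hZ : ∀ (x : E) (y : F),
      Z ((WithLp.equiv 2 (E × F)).symm (x, y)) = (WithLp.equiv 2 (E × F)).symm (N x, T y))
    (hZinj : Function.Injective Z)
    (l : ℂ) (X : WithLp 2 (E × F) →L[ℂ] WithLp 2 (E × F))
    (hX : Z ∘L X = l • (X ∘L Z))
    (X₁ : E →L[ℂ] E) (X₂ : F →L[ℂ] E) (X₃ : E →L[ℂ] F) (X₄ : F →L[ℂ] F)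
    (hblocks : ∀ (x : E) (y : F),
      X ((WithLp.equiv 2 (E × F)).symm (x, y)) = (WithLp.equiv 2 (E × F)).symm (X₁ x + X₂ y, X₃ x + X₄ y)) :
    X₃ = 0 ∧ N ∘L X₁ = l • (X₁ ∘L N) ∧ T ∘L X₄ = l • (X₄ ∘L T) ∧
      N ∘L X₂ = l • (X₂ ∘L T) := by
  have key : ∀ x y, N (X₁ x + X₂ y) = l • (X₁ (N x) + X₂ (T y)) ∧
      T (X₃ x + X₄ y) = l • (X₃ (N x) + X₄ (T y)) := by
    intro x y
    have h := DFunLike.congr_fun hX ((WithLp.equiv 2 (E × F)).symm (x, y))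
    rw [_root_.smul_apply, ContinuousLinearMap.comp_apply,
      ContinuousLinearMap.comp_apply, hblocks, hZ, hZ, hblocks] at h
    have h' := congrArg (WithLp.equiv 2 (E × F)) h
    exact Prod.ext_iff.1 h'
  have h3 : ∀ x, T (X₃ x) = X₃ ((l • N) x) := by
    intro x; simpa using (key x 0).2
  refine ⟨?_, ?_, ?_, ?_⟩
  · obtain ⟨K, _, _, _, j, M, hM, hj⟩ := hTsub
    have hA : ∀ x, adjoint (l • N) ((l • N) x) = (l • N) (adjoint (l • N) x) := by
      intro x
      have := DFunLike.congr_fun hN x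
      simp only [ContinuousLinearMap.comp_apply] at this
      have hs : adjoint (l • N) = (starRingEnd ℂ l) • adjoint N := map_smulₛₗ _ _ _
      simp [hs, this]
      exact smul_comm _ _ _
    have hfp := fp_hetero (l • N) M (j.toContinuousLinearMap ∘L X₃) hA
      (fun x => DFunLike.congr_fun hM x) (fun x => by simp [hj, h3])
    have hT' : ∀ x, adjoint T (X₃ x) = X₃ (adjoint (l • N) x) := by
      intro x
      refine ext_inner_right ℂ fun y => ?_
      have h := hfp x
      simp only [ContinuousLinearMap.comp_apply, LinearIsometry.coe_toContinuousLinearMap] at h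
      rw [adjoint_inner_left, ← j.inner_map_map, ← hj, ← adjoint_inner_left, h, j.inner_map_map]
    have hbot := hTpure X₃.range.topologicalClosure
      (Submodule.isClosed_topologicalClosure _) ?_ ?_ ?_
    · ext x
      have : X₃ x ∈ X₃.range.topologicalClosure :=
        Submodule.le_topologicalClosure _ ⟨x, rfl⟩
      rw [hbot] at this
      simpa using this
    · intro x hx
      refine (Set.MapsTo.closure (s := (X₃.range : Set F)) (t := X₃.range) ?_ T.continuous) hx
      rintro _ ⟨y, rfl⟩
      exact ⟨_, (h3 y).symm⟩
    · intro x hx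
      refine (Set.MapsTo.closure (s := (X₃.range : Set F)) (t := X₃.range) ?_ (adjoint T).continuous) hx
      rintro _ ⟨y, rfl⟩
      exact ⟨_, (hT' y).symm⟩
    · intro x hx
      have hcl : IsClosed {x | T (adjoint T x) = adjoint T (T x)} :=
        isClosed_eq (by fun_prop) (by fun_prop)
      refine closure_minimal (s := (X₃.range : Set F)) ?_ hcl hx
      rintro _ ⟨y, rfl⟩
      show T (adjoint T (X₃ y)) = adjoint T (T (X₃ y))
      rw [hT', h3, h3, hT', hA]
  · ext x; simpa using (key x 0).1
  · ext y; simpa using (key 0 y).2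
  · ext y; simpa using (key 0 y).1
end

section
/- Let 𝔏 be a complex Hilbert space, A an injective positive bounded operator on 𝔏, λ ∈ ℂ, and X a bounded operator on ℓ²(ℕ,𝔏) satisfying (A⊗S)∘X = λ·(X∘(A⊗S)). Then the matrix of X is lower triangular: for all i, j ∈ ℕ with i < j, the operator 𝔏 → 𝔏 sending x to (X(e_j ⊗ x))_i is zero, where e_j ⊗ x denotes the element of ℓ²(ℕ,𝔏) equal to x in position j and 0 in all other positions. -/
open ContinuousLinearMap

theorem lower_triangular_of_extended_eigenvector
    {𝔏 : Type*} [NormedAddCommGroup 𝔏] [InnerProductSpace ℂ 𝔏] [CompleteSpace 𝔏]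
    (A : 𝔏 →L[ℂ] 𝔏) (hAinj : Function.Injective A) (hApos : A.IsPositive)
    (AS : lp (fun _ : ℕ => 𝔏) 2 →L[ℂ] lp (fun _ : ℕ => 𝔏) 2)
    (hAS : ∀ x : lp (fun _ : ℕ => 𝔏) 2,
      (AS x) 0 = 0 ∧ ∀ n : ℕ, (AS x) (n + 1) = A (x n))
    (l : ℂ) (X : lp (fun _ : ℕ => 𝔏) 2 →L[ℂ] lp (fun _ : ℕ => 𝔏) 2)
    (hX : AS ∘L X = l • (X ∘L AS)) :
    ∀ i j : ℕ, i < j → ∀ x : 𝔏, (X (lp.single 2 j x)) i = 0 := by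
  have hdense : DenseRange A := by
    have hk : (LinearMap.range (A : 𝔏 →ₗ[ℂ] 𝔏))ᗮ = ⊥ := by
      rw [Submodule.eq_bot_iff]
      intro y hy
      apply hAinj
      rw [map_zero]
      have h1 : inner ℂ (A (A y)) y = 0 := (Submodule.mem_orthogonal _ _).1 hy _ ⟨A y, rfl⟩
      have h2 : inner ℂ (A (A y)) y = inner ℂ (A y) (A y) := hApos.isSymmetric (A y) y
      rw [h2] at h1
      exact inner_self_eq_zero.1 h1
    have h3 := (Submodule.topologicalClosure_eq_top_iff
      (K := LinearMap.range (A : 𝔏 →ₗ[ℂ] 𝔏))).2 hk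
    have h4 := Submodule.dense_iff_topologicalClosure_eq_top.2 h3
    exact h4
  have hXv : ∀ v, AS (X v) = l • X (AS v) := fun v => by
    have := congrArg (fun T => T v) hX
    simpa using this
  by_cases hl : l = 0
  · intro i j _ x
    apply hAinj
    rw [← (hAS _).2 i, hXv, hl]
    simp
  have hsingle : ∀ (j : ℕ) (x : 𝔏),
      AS (lp.single 2 j x) = lp.single 2 (j + 1) (A x) := by
    intro j x
    ext n
    cases n with
    | zero => rw [(hAS _).1]; simp [lp.single_apply, Pi.single_apply]
    | succ n =>
      rw [(hAS _).2]
      by_cases h : n = j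
      · subst h; simp
      · simp [lp.single_apply, Pi.single_apply, h]
  have key : ∀ i j : ℕ, (∀ x : 𝔏, (X (lp.single 2 (j + 1) (A x))) i = 0) →
      ∀ x : 𝔏, (X (lp.single 2 (j + 1) x)) i = 0 := by
    intro i j h x
    have hc : Continuous fun x : 𝔏 => (X (lp.single 2 (j + 1) x)) i := by
      have c1 : Continuous fun x : 𝔏 => (lp.single 2 (j + 1) x : lp (fun _ : ℕ => 𝔏) 2) :=
        (lp.singleContinuousLinearMap ℂ (fun _ : ℕ => 𝔏) 2 (j + 1)).continuous
      have c2 : Continuous fun v : lp (fun _ : ℕ => 𝔏) 2 => v i :=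
        (lp.evalCLM ℂ (fun _ : ℕ => 𝔏) 2 i).continuous
      exact c2.comp (X.continuous.comp c1)
    have := hdense.equalizer hc (continuous_const (y := (0 : 𝔏))) (funext h)
    exact congrFun this x
  intro i
  induction i with
  | zero =>
    intro j hj
    obtain ⟨j, rfl⟩ : ∃ k, j = k + 1 := ⟨j - 1, by omega⟩
    apply key
    intro x
    have h := (hAS (X (lp.single 2 j x))).1
    rw [hXv, hsingle] at h
    simpa [hl] using h
  | succ i ih =>
    intro j hj
    obtain ⟨j, rfl⟩ : ∃ k, j = k + 1 := ⟨j - 1, by omega⟩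
    apply key
    intro x
    have h := (hAS (X (lp.single 2 j x))).2 i
    rw [hXv, hsingle, ih j (by omega), map_zero] at h
    simpa [hl] using h
end

section
/- Let N be a normal bounded operator on a complex Hilbert space E and T a pure quasinormal bounded operator on a complex Hilbert space H, such that the direct sum R = N⊕T on the Hilbert space direct sum E⊕H is injective, and let λ ∈ ℂ. Then a bounded operator X on E⊕H satisfies R∘X = λ·(X∘R) if and only if its block matrix has the form [[X₁,X₂],[0,X₄]] where X₁ : E → E, X₂ : H → E and X₄ : H → H satisfy N∘X₁ = λ·(X₁∘N), T∘X₄ = λ·(X₄∘T) and N∘X₂ = λ·(X₂∘T). -/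
open ContinuousLinearMap

section Aux

open ContinuousLinearMap

variable {E F H : Type*} [NormedAddCommGroup E] [InnerProductSpace ℂ E] [CompleteSpace E]
  [NormedAddCommGroup F] [InnerProductSpace ℂ F] [CompleteSpace F]
  [NormedAddCommGroup H] [InnerProductSpace ℂ H] [CompleteSpace H]

theorem wext {A B : Type*} {z w : WithLp 2 (A × B)} (h1 : z.fst = w.fst) (h2 : z.snd = w.snd) :
    z = w := by
  apply (WithLp.equiv 2 (A × B)).injective
  exact Prod.ext h1 h2

/-- Block operator on a Hilbert direct sum. -/
noncomputable def blk (A : E →L[ℂ] E) (B : F →L[ℂ] E) (C : E →L[ℂ] F) (D : F →L[ℂ] F) :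
    WithLp 2 (E × F) →L[ℂ] WithLp 2 (E × F) :=
  (WithLp.prodContinuousLinearEquiv 2 ℂ E F).symm.toContinuousLinearMap ∘L
    (((A.coprod B).prod (C.coprod D)) ∘L
      (WithLp.prodContinuousLinearEquiv 2 ℂ E F).toContinuousLinearMap)

theorem blk_apply (A : E →L[ℂ] E) (B : F →L[ℂ] E) (C : E →L[ℂ] F) (D : F →L[ℂ] F)
    (z : WithLp 2 (E × F)) :
    blk A B C D z = WithLp.toLp 2 (A z.fst + B z.snd, C z.fst + D z.snd) := rfl

theorem blk_adjoint (A : E →L[ℂ] E) (B : F →L[ℂ] E) (C : E →L[ℂ] F) (D : F →L[ℂ] F) :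
    star (blk A B C D) = blk (adjoint A) (adjoint C) (adjoint B) (adjoint D) := by
  rw [star_eq_adjoint]
  symm
  rw [eq_adjoint_iff]
  intro x y
  simp only [blk_apply, WithLp.prod_inner_apply, inner_add_left, inner_add_right,
    adjoint_inner_left, WithLp.fst, WithLp.snd]
  ring

theorem blk_mul (A A' : E →L[ℂ] E) (B B' : F →L[ℂ] E) (C C' : E →L[ℂ] F) (D D' : F →L[ℂ] F) :
    blk A B C D * blk A' B' C' D' =
      blk (A ∘L A' + B ∘L C') (A ∘L B' + B ∘L D') (C ∘L A' + D ∘L C') (C ∘L B' + D ∘L D') := by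
  ext z
  show blk A B C D (blk A' B' C' D' z) = _
  apply wext
  · simp only [blk_apply, WithLp.fst, WithLp.snd, map_add, add_apply, comp_apply]
    abel
  · simp only [blk_apply, WithLp.fst, WithLp.snd, map_add, add_apply, comp_apply]
    abel

theorem fuglede_two (A : E →L[ℂ] E) (B : F →L[ℂ] F)
    (hA : adjoint A ∘L A = A ∘L adjoint A) (hB : adjoint B ∘L B = B ∘L adjoint B)
    (Y : E →L[ℂ] F) (h : B ∘L Y = Y ∘L A) :
    adjoint B ∘L Y = Y ∘L adjoint A := by
  have hn : IsStarNormal (blk A 0 0 B) := by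
    constructor
    show _ * _ = _ * _
    rw [blk_adjoint, blk_mul, blk_mul]
    simp [hA, hB]
  have hc : Commute (blk 0 0 Y 0) (blk A 0 0 B) := by
    show _ * _ = _ * _
    rw [blk_mul, blk_mul]
    simp [h]
  have h2 := (hn.commute_star_right hc).eq
  rw [blk_adjoint, blk_mul, blk_mul] at h2
  ext e
  have h3 := congrArg (fun f => (f (WithLp.toLp 2 (e, (0 : F)))).snd) h2
  simpa [blk_apply] using h3.symm

theorem qn_key {T : H →L[ℂ] H} (h : IsQuasinormal T) :
    ∀ x, adjoint T (T (T x)) = T (adjoint T (T x)) := by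
  have h0 : (0 : H →L[ℂ] H) ≤ adjoint T ∘L T := star_mul_self_nonneg T
  have h1 : modulus T * modulus T = adjoint T ∘L T := CFC.sqrt_mul_sqrt_self _ h0
  have h2 : Commute T (modulus T) := h
  have h3 : Commute T (adjoint T ∘L T) := h1 ▸ h2.mul_right h2
  intro x
  exact (congrArg (fun f : H →L[ℂ] H => f x) h3.eq).symm

theorem qn_pos {T : H →L[ℂ] H} (h : IsQuasinormal T) :
    (0 : H →L[ℂ] H) ≤ adjoint T ∘L T - T ∘L adjoint T := by
  set C := adjoint T ∘L T - T ∘L adjoint T with hC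
  have hsa : ∀ x y, inner ℂ (C x) y = inner ℂ x (C y) := by
    intro x y
    simp only [hC, sub_apply, comp_apply, inner_sub_left, inner_sub_right, adjoint_inner_left, adjoint_inner_right]
    rw [← adjoint_inner_left T ((adjoint T) y) x, ← adjoint_inner_right T ((adjoint T) x) y]
  have hCT : ∀ x, C (T x) = 0 := by
    intro x; simp [hC, qn_key h x]
  rw [nonneg_iff_isPositive]
  refine ⟨fun x y => hsa x y, fun x => ?_⟩
  let S : Submodule ℂ H := (LinearMap.range T.toLinearMap).topologicalClosure
  haveI : CompleteSpace S := (Submodule.isClosed_topologicalClosure _).completeSpace_coe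
  have hS : ∀ q ∈ S, C q = 0 := by
    intro q hq
    have : S ≤ LinearMap.ker C.toLinearMap := by
      apply Submodule.topologicalClosure_minimal
      · rintro _ ⟨y, rfl⟩
        exact hCT y
      · exact C.isClosed_ker
    exact this hq
  obtain ⟨q, hq, p, hp, rfl⟩ := S.exists_add_mem_mem_orthogonal x
  have hp' : adjoint T p = 0 := by
    refine ext_inner_left ℂ fun y => ?_
    rw [adjoint_inner_right, inner_zero_right]
    exact hp _ (Submodule.le_topologicalClosure _ ⟨y, rfl⟩)
  have e1 : C (q + p) = adjoint T (T p) := by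
    rw [map_add, hS q hq]; simp [hC, hp']
  have e2 : inner ℂ (C (q + p)) (q + p) = inner ℂ (T p) (T p) := by
    have e3 : inner ℂ (C (q + p)) q = 0 := by rw [hsa, hS q hq, inner_zero_right]
    rw [inner_add_right, e3, zero_add, e1, adjoint_inner_left]
  show 0 ≤ RCLike.re (inner ℂ (C (q + p)) (q + p))
  rw [e2]
  exact inner_self_nonneg

theorem intertwine_zero {T : H →L[ℂ] H} (h : IsQuasinormal T) (hp : IsPure T)
    {N : E →L[ℂ] E} (hN : adjoint N ∘L N = N ∘L adjoint N)
    (Y : E →L[ℂ] H) (hY : T ∘L Y = Y ∘L N) : Y = 0 := by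
  set C := adjoint T ∘L T - T ∘L adjoint T with hC
  have hpos : 0 ≤ C := qn_pos h
  set D : H →L[ℂ] H := CFC.sqrt C with hD
  have hDD : D ∘L D = C := CFC.sqrt_mul_sqrt_self C hpos
  have hDpos : 0 ≤ D := CFC.sqrt_nonneg C
  have hDsa : adjoint D = D := (IsSelfAdjoint.of_nonneg hDpos)
  have hDT : D ∘L T = 0 := by
    ext x
    have : inner ℂ (D (T x)) (D (T x)) = 0 := by
      nth_rewrite 1 [← hDsa]
      rw [adjoint_inner_left]
      have : D (D (T x)) = 0 := by
        have := congrArg (fun f : H →L[ℂ] H => f (T x)) hDD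
        simp only [comp_apply] at this
        rw [this]; simp [hC, qn_key h x]
      rw [this, inner_zero_right]
    simpa using this
  have hTD : adjoint T ∘L D = 0 := by
    have := congrArg adjoint hDT
    simpa [adjoint_comp, hDsa] using this
  have hM : adjoint (blk T D 0 (adjoint T)) ∘L blk T D 0 (adjoint T) =
      blk T D 0 (adjoint T) ∘L adjoint (blk T D 0 (adjoint T)) := by
    rw [← star_eq_adjoint]
    show star (blk T D 0 (adjoint T)) * blk T D 0 (adjoint T) =
      blk T D 0 (adjoint T) * star (blk T D 0 (adjoint T))
    rw [blk_adjoint, blk_mul, blk_mul]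
    simp [hDsa, hDD, hTD, hDT, hC]
  let J : E →L[ℂ] WithLp 2 (H × H) :=
    (WithLp.prodContinuousLinearEquiv 2 ℂ H H).symm.toContinuousLinearMap ∘L (Y.prod 0)
  have hJ : ∀ e, J e = WithLp.toLp 2 (Y e, 0) := fun e => rfl
  have hYe : ∀ e, T (Y e) = Y (N e) := fun e => congrArg (fun f : E →L[ℂ] H => f e) hY
  have hcomm : blk T D 0 (adjoint T) ∘L J = J ∘L N := by
    ext e
    apply wext <;> simp [hJ, blk_apply, hYe]
  have hf := fuglede_two N _ hN hM J hcomm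
  rw [← star_eq_adjoint, blk_adjoint] at hf
  have hT' : ∀ e, adjoint T (Y e) = Y (adjoint N e) := by
    intro e
    have := congrArg (fun f => (f e).fst) hf
    simpa [hJ, blk_apply] using this
  have hD' : ∀ e, D (Y e) = 0 := by
    intro e
    have := congrArg (fun f => (f e).snd) hf
    simpa [hJ, blk_apply, hDsa] using this
  have hC' : ∀ e, C (Y e) = 0 := by
    intro e
    rw [← hDD, comp_apply, hD', map_zero]
  let S : Submodule ℂ H := (LinearMap.range Y.toLinearMap).topologicalClosure
  have hcl : IsClosed (S : Set H) := Submodule.isClosed_topologicalClosure _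
  have hmem : ∀ e, Y e ∈ S := fun e => Submodule.le_topologicalClosure _ ⟨e, rfl⟩
  have hS : S = ⊥ := by
    apply hp S hcl
    · intro x hx
      have : S ≤ S.comap T.toLinearMap := by
        apply Submodule.topologicalClosure_minimal
        · rintro _ ⟨y, rfl⟩
          show T (Y y) ∈ S
          rw [hYe]; exact hmem _
        · exact hcl.preimage T.continuous
      exact this hx
    · intro x hx
      have : S ≤ S.comap (adjoint T).toLinearMap := by
        apply Submodule.topologicalClosure_minimal
        · rintro _ ⟨y, rfl⟩
          show adjoint T (Y y) ∈ S
          rw [hT']; exact hmem _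
        · exact hcl.preimage (adjoint T).continuous
      exact this hx
    · intro x hx
      have : S ≤ LinearMap.ker C.toLinearMap := by
        apply Submodule.topologicalClosure_minimal
        · rintro _ ⟨y, rfl⟩
          exact hC' y
        · exact C.isClosed_ker
      have hx' : C x = 0 := this hx
      exact (sub_eq_zero.mp hx').symm
  ext e
  have := hmem e
  rw [hS] at this
  simpa using this

end Aux

theorem extended_eigenvector_quasinormal_block_iff
    {E H : Type*} [NormedAddCommGroup E] [InnerProductSpace ℂ E] [CompleteSpace E] [NormedAddCommGroup H] [InnerProductSpace ℂ H] [CompleteSpace H]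
    (N : E →L[ℂ] E) (hN : adjoint N ∘L N = N ∘L adjoint N)
    (T : H →L[ℂ] H) (hTqn : IsQuasinormal T) (hTpure : IsPure T)
    (R : WithLp 2 (E × H) →L[ℂ] WithLp 2 (E × H))
    (hR : ∀ (x : E) (y : H),
      R ((WithLp.equiv 2 (E × H)).symm (x, y)) = (WithLp.equiv 2 (E × H)).symm (N x, T y))
    (hRinj : Function.Injective R)
    (l : ℂ) (X : WithLp 2 (E × H) →L[ℂ] WithLp 2 (E × H)) :
    R ∘L X = l • (X ∘L R) ↔
      ∃ (X₁ : E →L[ℂ] E) (X₂ : H →L[ℂ] E) (X₄ : H →L[ℂ] H),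
        N ∘L X₁ = l • (X₁ ∘L N) ∧ T ∘L X₄ = l • (X₄ ∘L T) ∧
        N ∘L X₂ = l • (X₂ ∘L T) ∧
        ∀ (x : E) (y : H),
          X ((WithLp.equiv 2 (E × H)).symm (x, y)) = (WithLp.equiv 2 (E × H)).symm (X₁ x + X₂ y, X₄ y) := by
  let ι₁ : E →L[ℂ] WithLp 2 (E × H) :=
    (WithLp.prodContinuousLinearEquiv 2 ℂ E H).symm.toContinuousLinearMap ∘L
      (ContinuousLinearMap.inl ℂ E H)
  let ι₂ : H →L[ℂ] WithLp 2 (E × H) :=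
    (WithLp.prodContinuousLinearEquiv 2 ℂ E H).symm.toContinuousLinearMap ∘L
      (ContinuousLinearMap.inr ℂ E H)
  have hι₁ : ∀ e, ι₁ e = WithLp.toLp 2 (e, 0) := fun _ => rfl
  have hι₂ : ∀ y, ι₂ y = WithLp.toLp 2 (0, y) := fun _ => rfl
  have hR' : ∀ z : WithLp 2 (E × H), R z = WithLp.toLp 2 (N z.fst, T z.snd) :=
    fun z => hR z.fst z.snd
  have hdec : ∀ (x : E) (y : H), (WithLp.toLp 2 (x, y) : WithLp 2 (E × H)) = ι₁ x + ι₂ y := by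
    intro x y
    rw [hι₁, hι₂, ← WithLp.toLp_add]
    simp
  constructor
  · intro h
    have hz : ∀ z, R (X z) = l • X (R z) := fun z =>
      congrArg (fun f : WithLp 2 (E × H) →L[ℂ] WithLp 2 (E × H) => f z) h
    have hf : ∀ z, N (X z).fst = l • (X (R z)).fst := fun z => by
      have := congrArg WithLp.fst (hz z)
      rwa [hR'] at this
    have hs : ∀ z, T (X z).snd = l • (X (R z)).snd := fun z => by
      have := congrArg WithLp.snd (hz z)
      rwa [hR'] at this
    have hR1 : ∀ e, R (ι₁ e) = ι₁ (N e) := fun e => by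
      rw [hR', hι₁, hι₁]; simp
    have hR2 : ∀ e, R (ι₂ e) = ι₂ (T e) := fun e => by
      rw [hR', hι₂, hι₂]; simp
    have hX3 : WithLp.sndL 2 ℂ E H ∘L X ∘L ι₁ = 0 := by
      by_cases hl : l = 0
      · ext e
        have h0 : R (ι₂ (X (ι₁ e)).snd) = R 0 := by
          rw [hR2, hs, hl, zero_smul, map_zero, map_zero]
        have := congrArg WithLp.snd (hRinj h0)
        simpa [hι₂] using this
      · apply intertwine_zero hTqn hTpure (N := l • N)
        · have : adjoint (l • N) = (starRingEnd ℂ l) • adjoint N := map_smulₛₗ _ _ _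
          rw [this]
          simp only [smul_comp, comp_smul, hN]
          rw [smul_comm]
        · ext e
          have := hs (ι₁ e)
          rw [hR1] at this
          simpa using this
    refine ⟨WithLp.fstL 2 ℂ E H ∘L X ∘L ι₁, WithLp.fstL 2 ℂ E H ∘L X ∘L ι₂,
      WithLp.sndL 2 ℂ E H ∘L X ∘L ι₂, ?_, ?_, ?_, ?_⟩
    · ext e
      have := hf (ι₁ e)
      rw [hR1] at this
      simpa using this
    · ext e
      have := hs (ι₂ e)
      rw [hR2] at this
      simpa using this
    · ext e
      have := hf (ι₂ e)
      rw [hR2] at this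
      simpa using this
    · intro x y
      have h3 : (X (ι₁ x)).snd = 0 := congrArg (fun f : E →L[ℂ] H => f x) hX3
      show X (WithLp.toLp 2 (x, y)) = WithLp.toLp 2 _
      rw [hdec, map_add]
      apply wext
      · simp
      · simp [h3]
  · rintro ⟨X₁, X₂, X₄, h1, h4, h2, hX⟩
    have hX' : ∀ z : WithLp 2 (E × H),
        X z = WithLp.toLp 2 (X₁ z.fst + X₂ z.snd, X₄ z.snd) := fun z => hX z.fst z.snd
    have h1' : ∀ e, N (X₁ e) = l • X₁ (N e) := fun e =>
      congrArg (fun f : E →L[ℂ] E => f e) h1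
    have h2' : ∀ e, N (X₂ e) = l • X₂ (T e) := fun e =>
      congrArg (fun f : H →L[ℂ] E => f e) h2
    have h4' : ∀ e, T (X₄ e) = l • X₄ (T e) := fun e =>
      congrArg (fun f : H →L[ℂ] H => f e) h4
    ext z
    apply wext
    · simp [hX', hR', h1', h2']
    · simp [hX', hR', h4']
end

section
/- Let N be a normal bounded operator on a complex Hilbert space E and T a pure quasinormal bounded operator on a complex Hilbert space H, such that the direct sum R = N⊕T on the Hilbert space direct sum E⊕H is injective. Then σ_ext(N⊕T) = σ_ext(N) ∪ σ_ext(T) ∪ Λ_int(N,T). -/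
open ContinuousLinearMap

set_option linter.unusedSectionVars false

lemma aux_pos {A : Type*} [CStarAlgebra A] [PartialOrder A] [StarOrderedRing A]
    (t : A) (ht : t * (star t * t) = (star t * t) * t) :
    0 ≤ star t * t - t * star t := by
  have hs : star t * (star t * t) = (star t * t) * star t := by
    have := congrArg star ht
    simpa [mul_assoc] using this.symm
  set D := star t * t - t * star t with hD
  have hDsa : IsSelfAdjoint D := by
    simp [IsSelfAdjoint, hD]
  have hDt : D * t = 0 := by
    rw [hD, sub_mul, ← ht]; simp [mul_assoc]
  have hD2 : D * D = D * (star t * t) := by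
    conv_lhs => rw [hD, mul_sub, ← hD, ← mul_assoc D t, hDt]
    simp
  have hcomm : D * (star t * t) = (star t * t) * D := by
    have := congrArg star hD2
    simp only [star_mul, hDsa.star_eq, star_star] at this
    rw [← hD2, this]
  have h3 : D ^ 3 = star (t * D) * (t * D) := by
    rw [star_mul, hDsa.star_eq, pow_three, hD2, hcomm]
    simp only [mul_assoc]
  have h3n : 0 ≤ D ^ 3 := h3 ▸ star_mul_self_nonneg _
  rw [StarOrderedRing.nonneg_iff_spectrum_nonneg (R := ℝ) D hDsa]
  intro x hx
  have := (StarOrderedRing.nonneg_iff_spectrum_nonneg (R := ℝ) (D ^ 3) (hDsa.pow 3)).1 h3n (x ^ 3)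
    (spectrum.pow_mem_pow D 3 hx)
  exact (Odd.pow_nonneg_iff (by decide)).1 this

lemma aux_fp {A : Type*} [CStarAlgebra A] [PartialOrder A] [StarOrderedRing A]
    (t n c : A) (ht : t * (star t * t) = (star t * t) * t) (hn : star n * n = n * star n)
    (h : t * c = c * n) : star t * c = c * star n := by
  have hD := aux_pos t ht
  set D := star t * t - t * star t with hDdef
  set x := CFC.sqrt D with hx
  have hxx : x * x = D := CFC.sqrt_mul_sqrt_self D hD
  have hxs : star x = x := (CFC.sqrt_nonneg D).isSelfAdjoint.star_eq
  have hxt : x * t = 0 := by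
    rw [← CStarRing.star_mul_self_eq_zero_iff, star_mul, hxs, mul_assoc, ← mul_assoc x x, hxx, hDdef,
      sub_mul, ← ht]
    simp [mul_assoc]
  have htx : star t * x = 0 := by
    have := congrArg star hxt
    simpa [hxs] using this
  let M : CStarMatrix (Fin 2) (Fin 2) A := CStarMatrix.ofMatrix !![t, x; 0, star t]
  let Nn : CStarMatrix (Fin 2) (Fin 2) A := CStarMatrix.ofMatrix !![n, 0; 0, 0]
  let Cc : CStarMatrix (Fin 2) (Fin 2) A := CStarMatrix.ofMatrix !![c, 0; 0, 0]
  have hM : IsStarNormal M := by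
    constructor
    ext i j
    fin_cases i <;> fin_cases j <;>
      simp [M, CStarMatrix.mul_apply, CStarMatrix.star_apply, Fin.sum_univ_two, hxs, hxt, htx, hxx, hDdef]
  have hNn : IsStarNormal Nn := by
    constructor
    ext i j
    fin_cases i <;> fin_cases j <;>
      simp [Nn, CStarMatrix.mul_apply, CStarMatrix.star_apply, Fin.sum_univ_two, hn]
  have hs : SemiconjBy Cc Nn M := by
    ext i j
    fin_cases i <;> fin_cases j <;>
      simp [M, Nn, Cc, CStarMatrix.mul_apply, Fin.sum_univ_two, h]
  have := congrArg (fun Z : CStarMatrix (Fin 2) (Fin 2) A => Z 0 0) (SemiconjBy.star_right hNn hM hs).eq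
  simpa [M, Nn, Cc, CStarMatrix.mul_apply, CStarMatrix.star_apply, Fin.sum_univ_two] using this.symm

section blocks
variable {E H : Type*} [NormedAddCommGroup E] [InnerProductSpace ℂ E] [CompleteSpace E]
  [NormedAddCommGroup H] [InnerProductSpace ℂ H] [CompleteSpace H]

/-- First inclusion. -/
noncomputable def inE (E H : Type*) [NormedAddCommGroup E] [InnerProductSpace ℂ E]
  [NormedAddCommGroup H] [InnerProductSpace ℂ H] : E →L[ℂ] WithLp 2 (E × H) :=
  ((WithLp.prodContinuousLinearEquiv 2 ℂ E H).symm : E × H →L[ℂ] WithLp 2 (E × H)) ∘L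
    ContinuousLinearMap.inl ℂ E H

/-- Second inclusion. -/
noncomputable def inH (E H : Type*) [NormedAddCommGroup E] [InnerProductSpace ℂ E]
  [NormedAddCommGroup H] [InnerProductSpace ℂ H] : H →L[ℂ] WithLp 2 (E × H) :=
  ((WithLp.prodContinuousLinearEquiv 2 ℂ E H).symm : E × H →L[ℂ] WithLp 2 (E × H)) ∘L
    ContinuousLinearMap.inr ℂ E H

/-- First projection. -/
noncomputable def prE (E H : Type*) [NormedAddCommGroup E] [InnerProductSpace ℂ E]
  [NormedAddCommGroup H] [InnerProductSpace ℂ H] : WithLp 2 (E × H) →L[ℂ] E :=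
  WithLp.fstL 2 ℂ E H

/-- Second projection. -/
noncomputable def prH (E H : Type*) [NormedAddCommGroup E] [InnerProductSpace ℂ E]
  [NormedAddCommGroup H] [InnerProductSpace ℂ H] : WithLp 2 (E × H) →L[ℂ] H :=
  WithLp.sndL 2 ℂ E H

lemma prE_inE (x : E) : prE E H (inE E H x) = x := rfl
lemma prH_inE (x : E) : prH E H (inE E H x) = 0 := rfl
lemma prE_inH (x : H) : prE E H (inH E H x) = 0 := rfl
lemma prH_inH (x : H) : prH E H (inH E H x) = x := rfl
lemma in_add (w : WithLp 2 (E × H)) : inE E H (prE E H w) + inH E H (prH E H w) = w := by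
  apply (WithLp.equiv 2 (E × H)).injective
  ext
  · show (prE E H w) + 0 = _
    simp; rfl
  · show 0 + (prH E H w) = _
    simp; rfl

lemma inner_inE (x : E) (w : WithLp 2 (E × H)) : inner ℂ (inE E H x) w = inner ℂ x (prE E H w) := by
  rw [WithLp.prod_inner_apply]
  show inner ℂ x (prE E H w) + inner ℂ (0 : H) _ = _
  simp

lemma inner_inH (x : H) (w : WithLp 2 (E × H)) : inner ℂ (inH E H x) w = inner ℂ x (prH E H w) := by
  rw [WithLp.prod_inner_apply]
  show inner ℂ (0 : E) _ + inner ℂ x (prH E H w) = _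
  simp

lemma adj_inE : adjoint (inE E H) = prE E H := by
  symm
  rw [eq_adjoint_iff]
  intro w x
  rw [← inner_conj_symm, ← inner_inE, inner_conj_symm]

lemma adj_inH : adjoint (inH E H) = prH E H := by
  symm
  rw [eq_adjoint_iff]
  intro w x
  rw [← inner_conj_symm, ← inner_inH, inner_conj_symm]

lemma adj_prE : adjoint (prE E H) = inE E H := by rw [← adj_inE, adjoint_adjoint]
lemma adj_prH : adjoint (prH E H) = inH E H := by rw [← adj_inH, adjoint_adjoint]

lemma op_fp (T : H →L[ℂ] H) (N : E →L[ℂ] E) (C : E →L[ℂ] H)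
    (hT : ∀ x, T (adjoint T (T x)) = adjoint T (T (T x)))
    (hN : ∀ x, adjoint N (N x) = N (adjoint N x))
    (h : ∀ x, T (C x) = C (N x)) (x : E) : adjoint T (C x) = C (adjoint N x) := by
  have := aux_fp (inH E H ∘L T ∘L prH E H) (inE E H ∘L N ∘L prE E H) (inH E H ∘L C ∘L prE E H)
    (by
      ext1 w
      simp [star_eq_adjoint, adjoint_comp, adj_inH, adj_prH, prH_inH, hT])
    (by
      ext1 w
      simp [star_eq_adjoint, adjoint_comp, adj_inE, adj_prE, prE_inE, hN])
    (by
      ext1 w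
      simp [prH_inH, prE_inE, h])
  have := congrArg (prH E H) (DFunLike.congr_fun this (inE E H x))
  simpa [star_eq_adjoint, adjoint_comp, adj_inH, adj_prH, adj_inE, adj_prE, prH_inH, prE_inE]
    using this

lemma op_zero (T : H →L[ℂ] H) (hp : IsPure T) (N : E →L[ℂ] E) (C : E →L[ℂ] H)
    (hT : ∀ x, T (adjoint T (T x)) = adjoint T (T (T x)))
    (hN : ∀ x, adjoint N (N x) = N (adjoint N x))
    (h : ∀ x, T (C x) = C (N x)) : C = 0 := by
  have h' := op_fp T N C hT hN h
  have hsub : ∀ (S : H →L[ℂ] H), (∀ x, S (C x) ∈ C.range) →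
      ∀ x ∈ C.range.topologicalClosure, S x ∈ C.range.topologicalClosure := by
    intro S hS x hx
    refine map_mem_closure S.continuous hx ?_
    rintro _ ⟨y, rfl⟩
    exact hS y
  have key := hp C.range.topologicalClosure (Submodule.isClosed_topologicalClosure _)
    (hsub T fun x => ⟨N x, (h x).symm⟩) (hsub (adjoint T) fun x => ⟨adjoint N x, (h' x).symm⟩) (by
      intro x hx
      have hcl : IsClosed {x | T (adjoint T x) = adjoint T (T x)} :=
        isClosed_eq (by fun_prop) (by fun_prop)
      refine closure_minimal ?_ hcl hx
      rintro _ ⟨y, rfl⟩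
      show T (adjoint T (C y)) = adjoint T (T (C y))
      rw [h', h, h, h', hN])
  ext x
  have : C x ∈ C.range.topologicalClosure := Submodule.le_topologicalClosure _ ⟨x, rfl⟩
  rw [key] at this
  simpa using this

lemma qn (T : H →L[ℂ] H) (hT : IsQuasinormal T) (x : H) :
    T (adjoint T (T x)) = adjoint T (T (T x)) := by
  have h0 : (0 : H →L[ℂ] H) ≤ adjoint T ∘L T := star_mul_self_nonneg T
  have hm : modulus T * modulus T = adjoint T ∘L T := CFC.sqrt_mul_sqrt_self _ h0
  have hc : Commute T (modulus T) := hT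
  have := hc.mul_right hc
  rw [hm] at this
  exact DFunLike.congr_fun this.eq x

end blocks

theorem extSpectrum_direct_sum
    {E H : Type*} [NormedAddCommGroup E] [InnerProductSpace ℂ E] [CompleteSpace E] [NormedAddCommGroup H] [InnerProductSpace ℂ H] [CompleteSpace H]
    (N : E →L[ℂ] E) (hN : adjoint N ∘L N = N ∘L adjoint N)
    (T : H →L[ℂ] H) (hTqn : IsQuasinormal T) (hTpure : IsPure T)
    (R : WithLp 2 (E × H) →L[ℂ] WithLp 2 (E × H))
    (hR : ∀ (x : E) (y : H),
      R ((WithLp.equiv 2 (E × H)).symm (x, y)) = (WithLp.equiv 2 (E × H)).symm (N x, T y))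
    (hRinj : Function.Injective R) :
    extSpectrum R = extSpectrum N ∪ extSpectrum T ∪ intertwiningValues N T := by
  have hRw : ∀ w, R w = inE E H (N (prE E H w)) + inH E H (T (prH E H w)) := by
    intro w
    have e : R w = (WithLp.equiv 2 (E × H)).symm (N (prE E H w), T (prH E H w)) :=
      hR (prE E H w) (prH E H w)
    rw [e, ← in_add ((WithLp.equiv 2 (E × H)).symm (N (prE E H w), T (prH E H w)))]
    rfl
  ext l
  constructor
  · rintro ⟨X, hX0, hX⟩
    have hXw : ∀ w, R (X w) = l • X (R w) := fun w => DFunLike.congr_fun hX w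
    by_cases hA : prE E H ∘L X ∘L inE E H = 0
    swap
    · refine Or.inl (Or.inl ⟨_, hA, ?_⟩)
      ext x
      have := congrArg (prE E H) (hXw (inE E H x))
      simpa [hRw, prE_inE, prH_inE, prE_inH] using this
    by_cases hB : prE E H ∘L X ∘L inH E H = 0
    swap
    · refine Or.inr ⟨_, hB, ?_⟩
      ext x
      have := congrArg (prE E H) (hXw (inH E H x))
      simpa [hRw, prE_inE, prH_inE, prE_inH, prH_inH] using this
    by_cases hD : prH E H ∘L X ∘L inH E H = 0
    swap
    · refine Or.inl (Or.inr ⟨_, hD, ?_⟩)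
      ext x
      have := congrArg (prH E H) (hXw (inH E H x))
      simpa [hRw, prE_inE, prH_inE, prE_inH, prH_inH] using this
    have hC : prH E H ∘L X ∘L inE E H = 0 := by
      refine op_zero T hTpure (l • N) _ (qn T hTqn) ?_ ?_
      · intro x
        have := DFunLike.congr_fun hN x
        simp only [comp_apply] at this
        simp [map_smulₛₗ, this, smul_smul, mul_comm]
      · intro x
        have := congrArg (prH E H) (hXw (inE E H x))
        simpa [hRw, prE_inE, prH_inE, prE_inH, prH_inH] using this
    exfalso
    apply hX0
    ext1 w
    have e1 := DFunLike.congr_fun hA (prE E H w)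
    have e2 := DFunLike.congr_fun hB (prH E H w)
    have e3 := DFunLike.congr_fun hC (prE E H w)
    have e4 := DFunLike.congr_fun hD (prH E H w)
    simp only [comp_apply, zero_apply] at e1 e2 e3 e4
    rw [← in_add (X w), ← in_add w, map_add X, map_add (prE E H), map_add (prH E H), e1, e2, e3, e4]
    simp
  · rintro ((⟨X, hX0, hX⟩ | ⟨X, hX0, hX⟩) | ⟨X, hX0, hX⟩)
    · refine ⟨inE E H ∘L X ∘L prE E H, fun h => hX0 ?_, ?_⟩
      · ext x
        simpa [prE_inE] using congrArg (prE E H) (DFunLike.congr_fun h (inE E H x))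
      · ext1 w
        have := DFunLike.congr_fun hX (prE E H w)
        simp only [comp_apply, smul_apply] at this
        simp [hRw, prE_inE, prH_inE, prE_inH, prH_inH, this]
    · refine ⟨inH E H ∘L X ∘L prH E H, fun h => hX0 ?_, ?_⟩
      · ext x
        simpa [prH_inH] using congrArg (prH E H) (DFunLike.congr_fun h (inH E H x))
      · ext1 w
        have := DFunLike.congr_fun hX (prH E H w)
        simp only [comp_apply, smul_apply] at this
        simp [hRw, prE_inE, prH_inE, prE_inH, prH_inH, this]
    · refine ⟨inE E H ∘L X ∘L prH E H, fun h => hX0 ?_, ?_⟩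
      · ext x
        simpa [prH_inH, prE_inE] using congrArg (prE E H) (DFunLike.congr_fun h (inH E H x))
      · ext1 w
        have := DFunLike.congr_fun hX (prH E H w)
        simp only [comp_apply, smul_apply] at this
        simp [hRw, prE_inE, prH_inE, prE_inH, prH_inH, this]
end

section
/- For i = 1,2, let T_i be an injective quasinormal bounded operator on a complex Hilbert space H_i, with polar decomposition T_i = V_i∘|T_i| where V_i is a linear isometry of H_i. For i = 1,2 let K_i be a complex Hilbert space, ι_i : H_i → K_i a linear isometry and N_i a normal bounded operator on K_i with N_i∘ι_i = ι_i∘T_i, and suppose each N_i is a minimal normal extension: the only closed subspace of K_i that is invariant under both N_i and N_i* and contains the range of ι_i is K_i itself. Then for a bounded operator X : H₂ → H₁ the following are equivalent: (1) there exists a bounded operator X̂ : K₂ → K₁ with X̂∘ι₂ = ι₁∘X and N₁∘X̂ = X̂∘N₂; (2) V₁∘X = X∘V₂ and |T₁|∘X = X∘|T₂|. -/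
open ContinuousLinearMap

section Helpers

variable {H K : Type*} [NormedAddCommGroup H] [InnerProductSpace ℂ H] [CompleteSpace H]
  [NormedAddCommGroup K] [InnerProductSpace ℂ K] [CompleteSpace K]

theorem cmul_app (A B : H →L[ℂ] H) (x : H) : (A * B) x = A (B x) := rfl

theorem aux_fuglede (N : H →L[ℂ] H) (M : K →L[ℂ] K)
    (hN : adjoint N ∘L N = N ∘L adjoint N) (hM : adjoint M ∘L M = M ∘L adjoint M)
    (X : K →L[ℂ] H) (h : N ∘L X = X ∘L M) : adjoint N ∘L X = X ∘L adjoint M := by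
  let J₁ : H →L[ℂ] WithLp 2 (H × K) :=
    ((WithLp.prodContinuousLinearEquiv 2 ℂ H K).symm : (H × K) →L[ℂ] WithLp 2 (H × K)) ∘L
      ContinuousLinearMap.inl ℂ H K
  let J₂ : K →L[ℂ] WithLp 2 (H × K) :=
    ((WithLp.prodContinuousLinearEquiv 2 ℂ H K).symm : (H × K) →L[ℂ] WithLp 2 (H × K)) ∘L
      ContinuousLinearMap.inr ℂ H K
  let P₁ : WithLp 2 (H × K) →L[ℂ] H := WithLp.fstL 2 ℂ H K
  let P₂ : WithLp 2 (H × K) →L[ℂ] K := WithLp.sndL 2 ℂ H K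
  have hP₁ : P₁ = adjoint J₁ := by
    rw [eq_adjoint_iff]; intro x y; simp [P₁, J₁]
  have hP₂ : P₂ = adjoint J₂ := by
    rw [eq_adjoint_iff]; intro x y; simp [P₂, J₂]
  have e11 : ∀ x, P₁ (J₁ x) = x := fun x => by simp [P₁, J₁]
  have e12 : ∀ x, P₁ (J₂ x) = 0 := fun x => by simp [P₁, J₂]
  have e21 : ∀ x, P₂ (J₁ x) = 0 := fun x => by simp [P₂, J₁]
  have e22 : ∀ x, P₂ (J₂ x) = x := fun x => by simp [P₂, J₂]
  let D : WithLp 2 (H × K) →L[ℂ] WithLp 2 (H × K) := J₁ ∘L N ∘L P₁ + J₂ ∘L M ∘L P₂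
  have hD : star D = J₁ ∘L adjoint N ∘L P₁ + J₂ ∘L adjoint M ∘L P₂ := by
    rw [star_eq_adjoint]
    simp only [D, map_add, adjoint_comp, hP₁, hP₂, adjoint_adjoint]
    rfl
  have hDn : IsStarNormal D := by
    constructor
    rw [commute_iff_eq, hD]
    ext1 x
    have a := fun y => congrArg (fun A => A y) hN
    have b := fun y => congrArg (fun A => A y) hM
    simp only [comp_apply] at a b
    simp [D, e11, e12, e21, e22, a, b]
  let Y : WithLp 2 (H × K) →L[ℂ] WithLp 2 (H × K) := J₁ ∘L X ∘L P₂
  have hY : Commute D Y := by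
    rw [commute_iff_eq]
    ext1 x
    have a := fun y => congrArg (fun A => A y) h
    simp only [comp_apply] at a
    simp [D, Y, e11, e12, e21, e22, a]
  have := hDn.commute_star_left hY
  rw [commute_iff_eq, hD] at this
  ext1 x
  have := congrArg (fun A => P₁ (A (J₂ x))) this
  simpa [Y, e11, e12, e21, e22] using this

theorem aux_dense (A : H →L[ℂ] H) (hA : adjoint A = A) (hinj : Function.Injective A) :
    DenseRange A := by
  have h : (LinearMap.range (A : H →ₗ[ℂ] H)).topologicalClosure = ⊤ := by
    rw [Submodule.topologicalClosure_eq_top_iff]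
    have := A.orthogonal_range
    rw [hA] at this
    rw [this]
    exact LinearMap.ker_eq_bot.2 hinj
  have := Submodule.dense_iff_topologicalClosure_eq_top.2 h
  exact this

theorem aux_sqrt (A : H →L[ℂ] H) (B : K →L[ℂ] K) (hA : 0 ≤ A) (hB : 0 ≤ B)
    (hd : DenseRange B)
    (X : K →L[ℂ] H) (h : (A ∘L A) ∘L X = X ∘L (B ∘L B)) : A ∘L X = X ∘L B := by
  let D := A ∘L X - X ∘L B
  have hAs : adjoint A = A := (IsSelfAdjoint.of_nonneg hA).adjoint_eq
  have hBs : adjoint B = B := (IsSelfAdjoint.of_nonneg hB).adjoint_eq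
  have h1 : A ∘L D = -(D ∘L B) := by
    have : A ∘L D + D ∘L B = (A ∘L A) ∘L X - X ∘L (B ∘L B) := by
      ext x; simp [D]
    rw [h, sub_self] at this
    exact eq_neg_of_add_eq_zero_left this
  have hDD : (0 : K →L[ℂ] K) ≤ adjoint D ∘L D := by
    rw [nonneg_iff_isPositive]
    exact isPositive_adjoint_comp_self D
  have hDAD : (0 : K →L[ℂ] K) ≤ adjoint D ∘L A ∘L D := by
    rw [nonneg_iff_isPositive] at hA ⊢
    exact hA.adjoint_conj D
  have h2 : (adjoint D ∘L D) * B = - (adjoint D ∘L A ∘L D) := by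
    rw [h1]; ext x; simp
  have hsa : IsSelfAdjoint ((adjoint D ∘L D) * B) := by
    rw [h2]; exact (IsSelfAdjoint.of_nonneg hDAD).neg
  have hc : Commute (adjoint D ∘L D) B :=
    ((IsSelfAdjoint.of_nonneg hDD).commute_iff (IsSelfAdjoint.of_nonneg hB)).2 hsa
  have h3 : 0 ≤ (adjoint D ∘L D) * B := hc.mul_nonneg hDD hB
  have h4 : (adjoint D ∘L D) * B = 0 := le_antisymm (by rw [h2]; simpa using hDAD) h3
  have h5 : ∀ x, D (B x) = 0 := by
    intro x
    have := congrArg (fun Z => inner ℂ (Z x) (B x)) h4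
    simp only [ContinuousLinearMap.zero_apply, inner_zero_left, cmul_app] at this
    rw [comp_apply, adjoint_inner_left] at this
    exact inner_self_eq_zero.1 this
  have h6 : D = 0 := by
    have : (D : K → H) = (0 : K →L[ℂ] H) :=
      hd.equalizer D.continuous (0 : K →L[ℂ] H).continuous (funext fun x => by simp [h5])
    exact DFunLike.coe_injective this
  exact sub_eq_zero.1 h6

theorem modulus_nonneg' (T : H →L[ℂ] H) : 0 ≤ modulus T := CFC.sqrt_nonneg _

theorem modulus_sq' (T : H →L[ℂ] H) : modulus T ∘L modulus T = adjoint T ∘L T := by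
  have : (0 : H →L[ℂ] H) ≤ adjoint T ∘L T := by
    rw [nonneg_iff_isPositive]
    exact isPositive_adjoint_comp_self T
  exact CFC.sqrt_mul_sqrt_self _ this

theorem modulus_adj' (T : H →L[ℂ] H) : adjoint (modulus T) = modulus T :=
  (IsSelfAdjoint.of_nonneg (modulus_nonneg' T)).adjoint_eq

theorem modulus_dense' (T : H →L[ℂ] H) (hT : Function.Injective T) (V : H →ₗᵢ[ℂ] H)
    (hV : ∀ x, T x = V (modulus T x)) : DenseRange (modulus T) := by
  apply aux_dense _ (modulus_adj' T)
  intro x y hxy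
  apply hT
  rw [hV, hV, hxy]

/-- `N*N` extends `T*T` when `T` is quasinormal. -/
theorem aux_NN (T : H →L[ℂ] H) (hT : IsQuasinormal T) (V : H →ₗᵢ[ℂ] H)
    (hV : ∀ x, T x = V (modulus T x)) (j : H →ₗᵢ[ℂ] K) (N : K →L[ℂ] K)
    (hN : adjoint N ∘L N = N ∘L adjoint N) (hext : ∀ x, N (j x) = j (T x)) (x : H) :
    adjoint N (N (j x)) = j (adjoint T (T x)) := by
  have hN' : ∀ z, adjoint N (N z) = N (adjoint N z) := fun z => congrArg (fun A => A z) hN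
  have hq : ∀ z, T (modulus T z) = modulus T (T z) := fun z => congrArg (fun A => A z) hT
  have hs : ∀ z, modulus T (modulus T z) = adjoint T (T z) :=
    fun z => congrArg (fun A => A z) (modulus_sq' T)
  have n1 : ‖adjoint T (T x)‖ = ‖T (T x)‖ := by
    rw [← hs, hV (T x), V.norm_map, ← hq, hV, V.norm_map]
  have n2 : inner ℂ (adjoint N (N (j x))) (adjoint N (N (j x)))
      = inner ℂ (T (T x)) (T (T x)) := by
    rw [adjoint_inner_left, ← hN', adjoint_inner_right, hext, hext, j.inner_map_map]
  have n3 : inner ℂ (adjoint T (T x)) (adjoint T (T x)) = inner ℂ (T (T x)) (T (T x)) := by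
    rw [inner_self_eq_norm_sq_to_K, inner_self_eq_norm_sq_to_K, n1]
  have n4 : inner ℂ (adjoint N (N (j x))) (j (adjoint T (T x)))
      = inner ℂ (T (T x)) (T (T x)) := by
    rw [adjoint_inner_left, hext, hext, j.inner_map_map, ← adjoint_inner_left, n3]
  have n5 : inner ℂ (j (adjoint T (T x))) (adjoint N (N (j x)))
      = inner ℂ (T (T x)) (T (T x)) := by
    rw [adjoint_inner_right, hext, hext, j.inner_map_map, ← adjoint_inner_right, n3]
  rw [← sub_eq_zero, ← inner_self_eq_zero (𝕜 := ℂ), inner_sub_left, inner_sub_right,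
    inner_sub_right, n2, n4, n5, j.inner_map_map, n3]
  simp

theorem aux_Vcomm (T : H →L[ℂ] H) (hTi : Function.Injective T) (hT : IsQuasinormal T)
    (V : H →ₗᵢ[ℂ] H) (hV : ∀ x, T x = V (modulus T x)) (x : H) :
    V (modulus T x) = modulus T (V x) := by
  have := (modulus_dense' T hTi V hV).equalizer (g := fun x => V (modulus T x))
    (h := fun x => modulus T (V x)) (by fun_prop) (by fun_prop) (by
      funext x
      have hq : T (modulus T x) = modulus T (T x) := congrArg (fun A => A x) hT
      simp only [Function.comp_apply]
      rw [← hV, ← hV, hq])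
  exact congrFun this x

theorem aux_pow_ext (T : H →L[ℂ] H) (j : H →ₗᵢ[ℂ] K) (N : K →L[ℂ] K)
    (hext : ∀ x, N (j x) = j (T x)) (n : ℕ) (x : H) : (N ^ n) (j x) = j ((T ^ n) x) := by
  induction n generalizing x with
  | zero => simp
  | succ n ih => rw [pow_succ, pow_succ, cmul_app, cmul_app, hext, ih]

theorem aux_iso_pow (W : H →L[ℂ] H) (hW : ∀ x y, inner ℂ (W x) (W y) = inner ℂ x y) (n : ℕ)
    (x y : H) : inner ℂ ((W ^ n) x) ((W ^ n) y) = inner ℂ x y := by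
  induction n generalizing x y with
  | zero => simp
  | succ n ih => rw [pow_succ, cmul_app, cmul_app, ih, hW]

theorem aux_iso_shift (W : H →L[ℂ] H) (hW : ∀ x y, inner ℂ (W x) (W y) = inner ℂ x y)
    (n k l : ℕ) (hk : k ≤ n) (hl : l ≤ n) (x y : H) :
    inner ℂ ((W ^ l) x) ((W ^ k) y) = inner ℂ ((W ^ (n - k)) x) ((W ^ (n - l)) y) := by
  rcases le_total k l with h | h
  · obtain ⟨d, rfl⟩ := Nat.exists_eq_add_of_le h
    obtain ⟨e, rfl⟩ := Nat.exists_eq_add_of_le hl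
    have e1 : k + d + e - k = e + d := by omega
    have e2 : k + d + e - (k + d) = e := by omega
    rw [e1, e2, pow_add, pow_add, cmul_app, cmul_app, aux_iso_pow W hW, aux_iso_pow W hW]
  · obtain ⟨d, rfl⟩ := Nat.exists_eq_add_of_le h
    obtain ⟨e, rfl⟩ := Nat.exists_eq_add_of_le hk
    have e1 : l + d + e - l = e + d := by omega
    have e2 : l + d + e - (l + d) = e := by omega
    rw [e1, e2, pow_add, pow_add, cmul_app, cmul_app, aux_iso_pow W hW, aux_iso_pow W hW]

theorem aux_norm (T : H →L[ℂ] H) (A W : H →L[ℂ] H) (hA : adjoint A = A)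
    (hW : ∀ x y, inner ℂ (W x) (W y) = inner ℂ x y) (hTW : T = W * A) (hc : Commute W A)
    (j : H →ₗᵢ[ℂ] K) (N : K →L[ℂ] K) (hN : adjoint N ∘L N = N ∘L adjoint N)
    (hext : ∀ x, N (j x) = j (T x)) (s : Finset ℕ) (n : ℕ) (hs : ∀ k ∈ s, k ≤ n) (f : ℕ → H) :
    ‖∑ k ∈ s, (adjoint N ^ k) (j (f k))‖ = ‖∑ k ∈ s, (W ^ (n - k)) ((A ^ k) (f k))‖ := by
  have hadj : ∀ k, adjoint N ^ k = adjoint (N ^ k) := fun k => (star_pow N k).symm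
  have hAk : ∀ k, adjoint (A ^ k) = A ^ k := fun k => by
    rw [← star_eq_adjoint, star_pow, star_eq_adjoint, hA]
  have hNc : Commute (adjoint N) N := hN
  have key : inner ℂ (∑ k ∈ s, (adjoint N ^ k) (j (f k))) (∑ k ∈ s, (adjoint N ^ k) (j (f k)))
      = inner ℂ (∑ k ∈ s, (W ^ (n - k)) ((A ^ k) (f k)))
        (∑ k ∈ s, (W ^ (n - k)) ((A ^ k) (f k))) := by
    simp only [sum_inner, inner_sum]
    refine Finset.sum_congr rfl fun k hk => Finset.sum_congr rfl fun l hl => ?_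
    have hcm : ∀ z, (N ^ l) ((adjoint N ^ k) z) = (adjoint N ^ k) ((N ^ l) z) := fun z =>
      (congrArg (fun Z => Z z) (hNc.pow_pow k l).eq).symm
    have hT : ∀ m, T ^ m = A ^ m * W ^ m := fun m => by
      rw [hTW, hc.mul_pow, (hc.pow_pow m m).eq]
    have hAW : ∀ p q z, (A ^ p) ((W ^ q) z) = (W ^ q) ((A ^ p) z) := fun p q z =>
      (congrArg (fun Z => Z z) (hc.pow_pow q p).eq).symm
    have hAA : ∀ p q z, (A ^ p) ((A ^ q) z) = (A ^ q) ((A ^ p) z) := fun p q z => by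
      rw [← cmul_app, ← cmul_app, ← pow_add, ← pow_add, add_comm]
    have hsym : ∀ p x y, inner ℂ ((A ^ p) x) y = inner ℂ x ((A ^ p) y) := fun p x y => by
      rw [← adjoint_inner_left, hAk]
    rw [hadj l, adjoint_inner_left, hcm, hadj k, adjoint_inner_right, aux_pow_ext T j N hext,
      aux_pow_ext T j N hext, j.inner_map_map, hT, hT, cmul_app, cmul_app,
      ← aux_iso_shift W hW n l k (hs l hl) (hs k hk), ← hAW, ← hAW, hsym, hsym, hAA]
  rw [inner_self_eq_norm_sq_to_K, inner_self_eq_norm_sq_to_K] at key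
  have key' : ‖∑ k ∈ s, (adjoint N ^ k) (j (f k))‖ ^ 2
    = ‖∑ k ∈ s, (W ^ (n - k)) ((A ^ k) (f k))‖ ^ 2 := by exact_mod_cast key
  exact (sq_eq_sq₀ (norm_nonneg _) (norm_nonneg _)).1 key'

/-- The map `(f_k) ↦ ∑ N*^k (J f_k)`. -/
noncomputable def auxL (N : K →L[ℂ] K) (J : H →L[ℂ] K) : (ℕ →₀ H) →ₗ[ℂ] K :=
  Finsupp.lsum ℂ fun k => (((adjoint N ^ k) ∘L J : H →L[ℂ] K) : H →ₗ[ℂ] K)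

theorem auxL_apply (N : K →L[ℂ] K) (J : H →L[ℂ] K) (f : ℕ →₀ H) :
    auxL N J f = ∑ k ∈ f.support, (adjoint N ^ k) (J (f k)) := by
  rw [auxL, Finsupp.lsum_apply]
  rfl

theorem auxL_single (N : K →L[ℂ] K) (J : H →L[ℂ] K) (k : ℕ) (x : H) :
    auxL N J (Finsupp.single k x) = (adjoint N ^ k) (J x) := by
  rw [auxL, Finsupp.lsum_single]
  rfl

theorem aux_Npow (N : K →L[ℂ] K) (hN : adjoint N ∘L N = N ∘L adjoint N) (k : ℕ) (z : K) :
    N ((adjoint N ^ k) z) = (adjoint N ^ k) (N z) := by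
  have hNc : Commute (adjoint N) N := hN
  exact (congrArg (fun Z => Z z) (hNc.pow_left k).eq).symm

theorem auxL_dense (T : H →L[ℂ] H) (j : H →ₗᵢ[ℂ] K) (N : K →L[ℂ] K)
    (hN : adjoint N ∘L N = N ∘L adjoint N) (hext : ∀ x, N (j x) = j (T x))
    (hmin : ∀ M : Submodule ℂ K, IsClosed (M : Set K) → (∀ x ∈ M, N x ∈ M) →
      (∀ x ∈ M, adjoint N x ∈ M) → Set.range ⇑j ⊆ (M : Set K) → M = ⊤) :
    DenseRange (auxL N j.toContinuousLinearMap) := by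
  have hlift : ∀ B : K →L[ℂ] K,
      (∀ k x, B ((adjoint N ^ k) (j x)) ∈ LinearMap.range (auxL N j.toContinuousLinearMap)) →
      ∀ x ∈ (LinearMap.range (auxL N j.toContinuousLinearMap)).topologicalClosure,
        B x ∈ (LinearMap.range (auxL N j.toContinuousLinearMap)).topologicalClosure := by
    intro B hB x hx
    refine map_mem_closure B.continuous hx ?_
    rintro _ ⟨f, rfl⟩
    rw [auxL_apply, map_sum]
    exact Submodule.sum_mem _ fun k _ => hB k _
  have h := hmin (LinearMap.range (auxL N j.toContinuousLinearMap)).topologicalClosure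
    (Submodule.isClosed_topologicalClosure _)
    (hlift N fun k x => ⟨Finsupp.single k (T x), by
      rw [auxL_single, aux_Npow N hN, hext]; rfl⟩)
    (hlift (adjoint N) fun k x => ⟨Finsupp.single (k + 1) x, by
      rw [auxL_single, pow_succ', cmul_app]; rfl⟩)
    (by
      rintro _ ⟨x, rfl⟩
      exact Submodule.le_topologicalClosure _ ⟨Finsupp.single 0 x, by
        rw [auxL_single]; simp⟩)
  exact Submodule.dense_iff_topologicalClosure_eq_top.2 h

end Helpers

theorem lifting_intertwiner_iff
    {H₁ H₂ K₁ K₂ : Type*} [NormedAddCommGroup H₁] [InnerProductSpace ℂ H₁] [CompleteSpace H₁] [NormedAddCommGroup H₂] [InnerProductSpace ℂ H₂] [CompleteSpace H₂]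
    [NormedAddCommGroup K₁] [InnerProductSpace ℂ K₁] [CompleteSpace K₁] [NormedAddCommGroup K₂] [InnerProductSpace ℂ K₂] [CompleteSpace K₂]
    (T₁ : H₁ →L[ℂ] H₁) (T₂ : H₂ →L[ℂ] H₂)
    (hT₁inj : Function.Injective T₁) (hT₂inj : Function.Injective T₂)
    (hT₁qn : IsQuasinormal T₁) (hT₂qn : IsQuasinormal T₂)
    (V₁ : H₁ →ₗᵢ[ℂ] H₁) (V₂ : H₂ →ₗᵢ[ℂ] H₂)
    (hV₁ : ∀ x, T₁ x = V₁ (modulus T₁ x)) (hV₂ : ∀ x, T₂ x = V₂ (modulus T₂ x))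
    (ι₁ : H₁ →ₗᵢ[ℂ] K₁) (ι₂ : H₂ →ₗᵢ[ℂ] K₂)
    (N₁ : K₁ →L[ℂ] K₁) (N₂ : K₂ →L[ℂ] K₂)
    (hN₁ : adjoint N₁ ∘L N₁ = N₁ ∘L adjoint N₁)
    (hN₂ : adjoint N₂ ∘L N₂ = N₂ ∘L adjoint N₂)
    (hext₁ : ∀ x, N₁ (ι₁ x) = ι₁ (T₁ x)) (hext₂ : ∀ x, N₂ (ι₂ x) = ι₂ (T₂ x))
    (hmin₁ : ∀ M : Submodule ℂ K₁, IsClosed (M : Set K₁) → (∀ x ∈ M, N₁ x ∈ M) →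
      (∀ x ∈ M, adjoint N₁ x ∈ M) → Set.range ⇑ι₁ ⊆ (M : Set K₁) → M = ⊤)
    (hmin₂ : ∀ M : Submodule ℂ K₂, IsClosed (M : Set K₂) → (∀ x ∈ M, N₂ x ∈ M) →
      (∀ x ∈ M, adjoint N₂ x ∈ M) → Set.range ⇑ι₂ ⊆ (M : Set K₂) → M = ⊤)
    (X : H₂ →L[ℂ] H₁) :
    (∃ Xhat : K₂ →L[ℂ] K₁, (∀ x, Xhat (ι₂ x) = ι₁ (X x)) ∧ N₁ ∘L Xhat = Xhat ∘L N₂) ↔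
      ((∀ x, V₁ (X x) = X (V₂ x)) ∧ modulus T₁ ∘L X = X ∘L modulus T₂) := by
  constructor
  · rintro ⟨Y, hY, hNY⟩
    have hF := aux_fuglede N₁ N₂ hN₁ hN₂ Y hNY
    have a : ∀ z, N₁ (Y z) = Y (N₂ z) := fun z => congrArg (fun A => A z) hNY
    have b : ∀ z, adjoint N₁ (Y z) = Y (adjoint N₂ z) := fun z => congrArg (fun A => A z) hF
    have hTX : ∀ x, T₁ (X x) = X (T₂ x) := fun x => ι₁.injective (by
      rw [← hext₁, ← hY, ← hY, a, hext₂])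
    have hm : modulus T₁ ∘L X = X ∘L modulus T₂ := by
      apply aux_sqrt _ _ (modulus_nonneg' _) (modulus_nonneg' _)
        (modulus_dense' T₂ hT₂inj V₂ hV₂)
      rw [modulus_sq', modulus_sq']
      ext1 x
      apply ι₁.injective
      simp only [comp_apply]
      rw [← aux_NN T₁ hT₁qn V₁ hV₁ ι₁ N₁ hN₁ hext₁, ← hY, ← hY, a, b,
        aux_NN T₂ hT₂qn V₂ hV₂ ι₂ N₂ hN₂ hext₂]
    refine ⟨fun x => ?_, hm⟩
    have hm' : ∀ z, modulus T₁ (X z) = X (modulus T₂ z) := fun z => congrArg (fun A => A z) hm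
    have := (modulus_dense' T₂ hT₂inj V₂ hV₂).equalizer (g := fun x => V₁ (X x))
      (h := fun x => X (V₂ x)) (by fun_prop) (by fun_prop) (by
        funext x
        simp only [Function.comp_apply]
        rw [← hm', ← hV₁, ← hV₂, hTX])
    exact congrFun this x
  · rintro ⟨hVX, hm⟩
    have hm' : ∀ z, modulus T₁ (X z) = X (modulus T₂ z) := fun z => congrArg (fun A => A z) hm
    have hTX : ∀ x, T₁ (X x) = X (T₂ x) := fun x => by rw [hV₁, hV₂, hm', hVX]
    have hd := auxL_dense T₂ ι₂ N₂ hN₂ hext₂ hmin₂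
    have hVp : ∀ n x, (V₁.toContinuousLinearMap ^ n) (X x)
        = X ((V₂.toContinuousLinearMap ^ n) x) := by
      intro n
      induction n with
      | zero => intro x; simp
      | succ n ih =>
        intro x
        rw [pow_succ, pow_succ, cmul_app, cmul_app, ← ih]
        exact congrArg _ (hVX x)
    have hAp : ∀ n x, (modulus T₁ ^ n) (X x) = X ((modulus T₂ ^ n) x) := by
      intro n
      induction n with
      | zero => intro x; simp
      | succ n ih =>
        intro x
        rw [pow_succ, pow_succ, cmul_app, cmul_app, ← ih, hm']
    have hbd : ∀ f, ‖auxL N₁ (ι₁.toContinuousLinearMap ∘L X) f‖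
        ≤ ‖X‖ * ‖auxL N₂ ι₂.toContinuousLinearMap f‖ := by
      intro f
      have hs : ∀ k ∈ f.support, k ≤ f.support.sup id := fun k hk =>
        Finset.le_sup (f := id) hk
      have n1 := aux_norm T₁ (modulus T₁) V₁.toContinuousLinearMap (modulus_adj' T₁)
        (fun x y => V₁.inner_map_map x y) (ContinuousLinearMap.ext hV₁)
        (ContinuousLinearMap.ext (aux_Vcomm T₁ hT₁inj hT₁qn V₁ hV₁)) ι₁ N₁ hN₁ hext₁
        f.support _ hs (fun k => X (f k))
      have n2 := aux_norm T₂ (modulus T₂) V₂.toContinuousLinearMap (modulus_adj' T₂)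
        (fun x y => V₂.inner_map_map x y) (ContinuousLinearMap.ext hV₂)
        (ContinuousLinearMap.ext (aux_Vcomm T₂ hT₂inj hT₂qn V₂ hV₂)) ι₂ N₂ hN₂ hext₂
        f.support _ hs (fun k => f k)
      simp only [hAp, hVp, ← map_sum] at n1
      rw [auxL_apply, auxL_apply]
      refine (le_of_eq n1).trans ((X.le_opNorm _).trans (le_of_eq ?_))
      exact congrArg (fun t => ‖X‖ * t) n2.symm
    let Y := (auxL N₁ (ι₁.toContinuousLinearMap ∘L X)).extendOfNorm
      (auxL N₂ ι₂.toContinuousLinearMap)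
    have hYL : ∀ f, Y (auxL N₂ ι₂.toContinuousLinearMap f)
        = auxL N₁ (ι₁.toContinuousLinearMap ∘L X) f :=
      fun f => LinearMap.extendOfNorm_eq hd ⟨_, hbd⟩ f
    have hYk : ∀ k x, Y ((adjoint N₂ ^ k) (ι₂ x)) = (adjoint N₁ ^ k) (ι₁ (X x)) := by
      intro k x
      have := hYL (Finsupp.single k x)
      rw [auxL_single, auxL_single] at this
      exact this
    refine ⟨Y, fun x => by simpa using hYk 0 x, ?_⟩
    have := hd.equalizer (g := fun z => N₁ (Y z)) (h := fun z => Y (N₂ z))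
      (by fun_prop) (by fun_prop) (by
        funext f
        simp only [Function.comp_apply]
        rw [auxL_apply]
        simp only [map_sum, LinearIsometry.coe_toContinuousLinearMap]
        refine Finset.sum_congr rfl fun k _ => ?_
        rw [hYk, aux_Npow N₁ hN₁, aux_Npow N₂ hN₂, hext₁, hext₂, hYk, hTX])
    exact ContinuousLinearMap.ext fun z => congrFun this z
end
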